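/- Every regular semilocal Noetherian integral domain is a unique factorization domain. -/

import Mathlib

/-- A Noetherian local ring is *regular* if its maximal ideal can be generated by a family of
elements whose cardinality equals the Krull dimension of the ring. -/
def IsRegularLocal (R : Type) [CommRing R] [IsLocalRing R] : Prop :=
  IsNoetherianRing R ∧
    ∃ s : Finset R, Ideal.span (s : Set R) = IsLocalRing.maximalIdeal R ∧
      (s.card : WithBot ℕ∞) = ringKrullDim R

open IsLocalRing
open scoped Pointwise

lemma aux_dim_nat (A : Type*) [CommRing A] [IsLocalRing A] [IsNoetherianRing A] :
    ∃ n : ℕ, ringKrullDim A = n := by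
  have h := finiteRingKrullDim_iff_ne_bot_and_top.mp (inferInstance : FiniteRingKrullDim A)
  generalize ringKrullDim A = d at h
  lift d to ℕ∞ using h.1
  lift d to ℕ using (by rintro rfl; exact h.2 rfl)
  exact ⟨d, rfl⟩

lemma aux_isLocal {A : Type*} [CommRing A] [IsLocalRing A] {x : A} (hx : x ∈ maximalIdeal A) :
    IsLocalRing (A ⧸ Ideal.span {x}) :=
  haveI : Nontrivial (A ⧸ Ideal.span {x}) := Ideal.Quotient.nontrivial_iff.mpr
    (by intro h; exact (Ideal.IsPrime.ne_top' (I := maximalIdeal A))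
          (top_le_iff.mp (h ▸ (Ideal.span_singleton_le_iff_mem _).mpr hx)))
  IsLocalRing.of_surjective' (Ideal.Quotient.mk (Ideal.span {x})) Ideal.Quotient.mk_surjective

lemma aux_spanFinrank {A : Type*} [CommRing A] [IsLocalRing A] [IsNoetherianRing A] {x : A}
    (hx : x ∈ maximalIdeal A) (hx2 : x ∉ maximalIdeal A ^ 2) [IsLocalRing (A ⧸ Ideal.span {x})] :
    (maximalIdeal (A ⧸ Ideal.span {x})).spanFinrank + 1 ≤ (maximalIdeal A).spanFinrank := by
  have hlocal : IsLocalHom (Ideal.Quotient.mk (Ideal.span {x})) :=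
    .of_surjective _ Ideal.Quotient.mk_surjective
  classical
  set v : CotangentSpace A := (maximalIdeal A).toCotangent ⟨x, hx⟩ with hv
  have hv0 : v ≠ 0 := by
    rw [hv, Ne, Ideal.toCotangent_eq_zero]; exact hx2
  have hli : LinearIndepOn (ResidueField A) id ({v} : Set (CotangentSpace A)) :=
    LinearIndepOn.singleton hv0
  let E := hli.extend (Set.subset_univ _)
  let b := Module.Basis.extend hli
  have hvE : v ∈ E := hli.subset_extend (Set.subset_univ _) rfl
  have hfinE : Finite E := Module.Finite.finite_basis b
  have hcard : E.ncard = (maximalIdeal A).spanFinrank := by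
    rw [spanFinrank_maximalIdeal_eq_finrank_cotangentSpace, Module.finrank_eq_nat_card_basis b]
    rfl
  have hspanE : Submodule.span (ResidueField A) E = ⊤ := by
    have := b.span_eq
    rwa [Module.Basis.range_extend] at this
  let L : CotangentSpace A → maximalIdeal A :=
    Function.update (Function.surjInv (maximalIdeal A).toCotangent_surjective) v ⟨x, hx⟩
  have hL : ∀ w, (maximalIdeal A).toCotangent (L w) = w := by
    intro w
    by_cases h : w = v
    · subst h; simp [L, hv]
    · simp only [L, Function.update_of_ne h]
      exact Function.surjInv_eq _ w
  have hLv : L v = ⟨x, hx⟩ := by simp [L]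
  have himg : (maximalIdeal A).toCotangent '' (L '' E) = E := by
    rw [Set.image_image]; simp [hL]
  have hs : Submodule.span A (L '' E) = ⊤ := by
    rw [← CotangentSpace.span_image_eq_top_iff, himg, hspanE]
  have hs' : Ideal.span ((fun w => (L w : A)) '' E) = maximalIdeal A := by
    have := congrArg (Submodule.map (maximalIdeal A).subtype) hs
    rw [Submodule.map_span, Submodule.map_top, Submodule.range_subtype, Set.image_image] at this
    exact this
  have hmap : maximalIdeal (A ⧸ Ideal.span {x}) =
      Ideal.span ((fun w => Ideal.Quotient.mk (Ideal.span {x}) (L w : A)) '' (E \ {v})) := by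
    have h1 : maximalIdeal (A ⧸ Ideal.span {x}) =
        (maximalIdeal A).map (Ideal.Quotient.mk (Ideal.span {x})) := by
      have h0 : (maximalIdeal (A ⧸ Ideal.span {x})).comap (Ideal.Quotient.mk (Ideal.span {x})) =
        maximalIdeal A := ((local_hom_TFAE (Ideal.Quotient.mk (Ideal.span {x}))).out 0 4).mp hlocal
      rw [← h0,
        Ideal.map_comap_of_surjective _ Ideal.Quotient.mk_surjective]
    rw [h1]
    conv_lhs => rw [← hs', Ideal.map_span, Set.image_image, ← Set.insert_sdiff_self_of_mem hvE,
      Set.image_insert_eq]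
    rw [Ideal.span_insert, hLv, Ideal.Quotient.mk_singleton_self, Ideal.span_singleton_zero, bot_sup_eq]
    
  have hfin : (E \ {v}).Finite := Set.Finite.subset (Set.toFinite E) Set.sdiff_subset
  rw [hmap, ← hcard]
  have h2 := Submodule.spanFinrank_span_le_ncard_of_finite (R := A ⧸ Ideal.span {x}) (hfin.image
    (fun w => Ideal.Quotient.mk (Ideal.span {x}) (L w : A)))
  have h3 := Set.ncard_image_le (f := fun w => Ideal.Quotient.mk (Ideal.span {x}) (L w : A)) hfin
  have h4 := Set.ncard_sdiff_singleton_add_one hvE (Set.toFinite E)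
  have h5 := h2.trans h3
  calc _ ≤ (E \ {v}).ncard + 1 := by gcongr
    _ = _ := h4

/-- cutting by a non-square-order element. -/
lemma aux_regular_quot {A : Type*} [CommRing A] [IsRegularLocalRing A] {x : A}
    (hx : x ∈ maximalIdeal A) (hx2 : x ∉ maximalIdeal A ^ 2) :
    IsRegularLocalRing (A ⧸ Ideal.span {x}) ∧
      ringKrullDim (A ⧸ Ideal.span {x}) + 1 = ringKrullDim A := by
  have h1 : ringKrullDim A ≤ ringKrullDim (A ⧸ Ideal.span {x}) + 1 := by
    rw [← maximalIdeal_height_eq_ringKrullDim]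
    exact Ideal.height_le_ringKrullDim_quotient_add_one hx
  have := aux_isLocal hx
  have key := aux_spanFinrank hx hx2
  have h2 := ringKrullDim_le_spanFinrank_maximalIdeal (A ⧸ Ideal.span {x})
  have h3 := IsRegularLocalRing.spanFinrank_maximalIdeal (R := A)
  have h4 : (((maximalIdeal (A ⧸ Ideal.span {x})).spanFinrank + 1 : ℕ) : WithBot ℕ∞) ≤ ringKrullDim A := by
    rw [← h3]; exact_mod_cast key
  push_cast at h4
  have hbot : ((1 : ℕ) : WithBot ℕ∞) ≠ ⊥ := WithBot.coe_ne_bot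
  have h5 : ringKrullDim (A ⧸ Ideal.span {x}) + 1 ≤ ringKrullDim A :=
    le_trans (by gcongr) h4
  refine ⟨?_, le_antisymm h5 h1⟩
  refine IsRegularLocalRing.of_spanFinrank_maximalIdeal_le _ ?_
  have h6 := h4.trans h1
  obtain ⟨n, hn⟩ := aux_dim_nat (A ⧸ Ideal.span {x})
  rw [hn] at h6 ⊢
  have h7 : (maximalIdeal (A ⧸ Ideal.span {x})).spanFinrank + 1 ≤ n + 1 := by exact_mod_cast h6
  exact_mod_cast Nat.le_of_succ_le_succ h7

lemma aux_exists_not_mem {A : Type*} [CommRing A] [IsLocalRing A] [IsNoetherianRing A]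
    (h : ringKrullDim A ≠ 0) :
    ∃ x ∈ maximalIdeal A, x ∉ maximalIdeal A ^ 2 ∧ ∀ p ∈ minimalPrimes A, x ∉ p := by
  classical
  by_contra! hcon
  have hfin := minimalPrimes.finite_of_isNoetherianRing A
  have hsub : (maximalIdeal A : Set A) ⊆
      ⋃ i ∈ ((insert (maximalIdeal A ^ 2) hfin.toFinset : Finset (Ideal A)) : Set (Ideal A)),
        (id i : Ideal A) := by
    intro x hx
    by_cases h2 : x ∈ maximalIdeal A ^ 2
    · exact Set.mem_biUnion (by simp) h2
    · obtain ⟨p, hp, hxp⟩ := hcon x hx h2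
      exact Set.mem_biUnion (x := p) (by simp [hp]) hxp
  rw [Ideal.subset_union_prime (maximalIdeal A ^ 2) (maximalIdeal A ^ 2)] at hsub
  · obtain ⟨i, hi, hle⟩ := hsub
    rw [Finset.mem_insert] at hi
    have key : ringKrullDim A ≤ 0 := by
      rw [← maximalIdeal_height_eq_ringKrullDim]
      suffices (maximalIdeal A).height = 0 by rw [this]; rfl
      rcases hi with rfl | hi
      · have : IsField A := by
          rw [← subsingleton_cotangentSpace_iff]
          refine (maximalIdeal A).cotangent_subsingleton_iff.mpr ?_
          unfold IsIdempotentElem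
          rw [← pow_two]
          exact le_antisymm (Ideal.pow_le_self two_ne_zero) hle
        rw [isField_iff_maximalIdeal_eq] at this
        rw [this]
        exact Ideal.height_bot
      · rw [Set.Finite.mem_toFinset] at hi
        have : maximalIdeal A = i := le_antisymm hle (le_maximalIdeal hi.1.1.ne_top)
        rw [Ideal.height_eq_zero_iff, this]
        exact hi
    exact h (le_antisymm key ringKrullDim_nonneg_of_nontrivial)
  · intro i hi h1 _
    rw [Finset.mem_insert] at hi
    have := hi.resolve_left h1
    rw [Set.Finite.mem_toFinset] at this
    exact this.1.1

lemma aux_isDomain (n : ℕ) : ∀ (A : Type*) [CommRing A] [IsRegularLocalRing A],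
    ringKrullDim A = n → IsDomain A := by
  induction n with
  | zero =>
    intro A _ _ h
    have h1 := IsRegularLocalRing.spanFinrank_maximalIdeal (R := A)
    rw [h] at h1
    have h2 : (maximalIdeal A).spanFinrank = 0 := by exact_mod_cast h1
    rw [Submodule.spanFinrank_eq_zero_iff_eq_bot (IsNoetherian.noetherian _)] at h2
    exact (isField_iff_maximalIdeal_eq.mpr h2).isDomain
  | succ n ih =>
    intro A _ _ h
    obtain ⟨x, hx, hx2, hmin⟩ := aux_exists_not_mem (A := A) (by
      rw [h]; exact_mod_cast Nat.succ_ne_zero n)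
    obtain ⟨hreg, hdim⟩ := aux_regular_quot hx hx2
    have hd : ringKrullDim (A ⧸ Ideal.span {x}) = n := by
      obtain ⟨k, hk⟩ := aux_dim_nat (A ⧸ Ideal.span {x})
      rw [hk, h] at hdim
      rw [hk]
      have : k + 1 = n + 1 := by exact_mod_cast hdim
      exact_mod_cast Nat.succ_injective this
    have hdom := ih _ hd
    have hpr : (Ideal.span {x}).IsPrime := (Ideal.Quotient.isDomain_iff_prime _).mp hdom
    obtain ⟨q, hq, hqx⟩ := Ideal.exists_minimalPrimes_le (I := (⊥ : Ideal A)) (J := Ideal.span {x}) bot_le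
    have hqp : q.IsPrime := hq.1.1
    have hxq : x ∉ q := hmin q hq
    have hle : q ≤ maximalIdeal A • q := by
      intro y hy
      obtain ⟨a, rfl⟩ := Ideal.mem_span_singleton'.mp (hqx hy)
      rw [mul_comm]
      exact Submodule.smul_mem_smul hx ((hqp.mem_or_mem hy).resolve_right hxq)
    have hq0 : q = ⊥ := Submodule.eq_bot_of_le_smul_of_le_jacobson_bot _ q
      (IsNoetherian.noetherian _) hle (IsLocalRing.jacobson_eq_maximalIdeal _ bot_ne_top).ge
    subst hq0
    exact IsDomain.of_bot_isPrime A


def AllSyzFree (A : Type) [CommRing A] : ℕ → ∀ (M : Type) [AddCommGroup M] [Module A M], Prop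
  | 0, M, _, _ => Module.Free A M
  | n+1, M, _, _ => ∀ (k : ℕ) (f : (Fin k → A) →ₗ[A] M), Function.Surjective f →
      AllSyzFree A n (LinearMap.ker f)

lemma AllSyzFree.congr {A : Type} [CommRing A] (n : ℕ) {M N : Type} [AddCommGroup M] [Module A M]
    [AddCommGroup N] [Module A N] (e : M ≃ₗ[A] N) (h : AllSyzFree A n M) : AllSyzFree A n N := by
  cases n with
  | zero =>
    have : Module.Free A M := h
    exact Module.Free.of_equiv e
  | succ n =>
    intro k f hf
    have := h k (e.symm.toLinearMap ∘ₗ f) (e.symm.surjective.comp hf)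
    rwa [LinearEquiv.ker_comp] at this

set_option maxHeartbeats 1000000 in
lemma AllSyzFree.of_quot {A : Type} [CommRing A] [IsNoetherianRing A] [IsLocalRing A] [IsDomain A]
    (x : A) (hx : x ∈ maximalIdeal A) (hx0 : x ≠ 0) (n : ℕ) :
    ∀ (M : Type) [AddCommGroup M] [Module A M] [Module.Finite A M], IsSMulRegular M x →
      AllSyzFree (A ⧸ Ideal.span {x}) n (QuotSMulTop x M) → AllSyzFree A n M := by
  induction n with
  | zero =>
    intro M _ _ _ hreg h
    have : Module.FinitePresentation A M := Module.finitePresentation_of_finite A M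
    refine (Module.free_quotSMulTop_iff_free A M ?_ hreg).1 h
    rwa [IsLocalRing.jacobson_eq_maximalIdeal _ bot_ne_top]
  | succ n ih =>
    intro M _ _ _ hreg h k f hf
    have regL : IsSMulRegular (LinearMap.ker f) x := by
      intro a b hab
      ext i
      have := congrArg (fun z : LinearMap.ker f => (z : Fin k → A) i) hab
      simpa [hx0] using this
    refine ih (LinearMap.ker f) regL ?_
    let Q := A ⧸ Ideal.span {x}
    let mkM : M →ₗ[A] QuotSMulTop x M := Submodule.mkQ _
    let π : (Fin k → A) →ₗ[A] (Fin k → Q) := (Algebra.linearMap A Q).compLeft (Fin k)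
    let F : (Fin k → Q) →ₗ[Q] QuotSMulTop x M :=
      Fintype.linearCombination Q (fun i => mkM (f (Pi.single i 1)))
    have hF : ∀ v, F (π v) = mkM (f v) := by
      intro v
      have hv : f v = ∑ i, v i • f (Pi.single i 1) := by
        conv_lhs => rw [pi_eq_sum_univ' v, map_sum]
        simp only [map_smul]
      rw [hv, map_sum]
      simp only [map_smul]
      simp [F, π, Fintype.linearCombination_apply, Q]
    have hmkM : Function.Surjective mkM := Submodule.mkQ_surjective _
    have hπ : Function.Surjective π := by
      intro w
      choose v hv using fun i => Ideal.Quotient.mk_surjective (w i)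
      exact ⟨v, funext hv⟩
    have hFs : Function.Surjective F := by
      intro m
      obtain ⟨m, rfl⟩ := hmkM m
      obtain ⟨v, rfl⟩ := hf m
      exact ⟨π v, hF v⟩
    have hπ0 : ∀ v, π v = 0 → ∃ w, v = x • w := by
      intro v hv
      have : ∀ i, ∃ a, v i = x * a := by
        intro i
        have := congrFun hv i
        have h2 : v i ∈ Ideal.span {x} := Ideal.Quotient.eq_zero_iff_mem.1 this
        obtain ⟨a, ha⟩ := Ideal.mem_span_singleton.1 h2
        exact ⟨a, ha⟩
      choose w hw using this
      exact ⟨w, funext hw⟩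
    have hmk0 : ∀ m, mkM m = 0 → ∃ m', m = x • m' := by
      intro m hm
      have : m ∈ x • (⊤ : Submodule A M) := (Submodule.Quotient.mk_eq_zero _).1 hm
      obtain ⟨m', -, h⟩ := (Submodule.mem_smul_pointwise_iff_exists _ _ _).1 this
      exact ⟨m', h.symm⟩
    let g : LinearMap.ker f →ₗ[A] (LinearMap.ker F).restrictScalars A :=
      LinearMap.codRestrict _ (π ∘ₗ (LinearMap.ker f).subtype) (by
        rintro ⟨v, hv⟩
        have hv' : f v = 0 := hv
        change F (π v) = 0
        rw [hF, hv', map_zero])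
    have hgs : Function.Surjective g := by
      rintro ⟨w, hw⟩
      obtain ⟨v, rfl⟩ := hπ w
      have hw' : F (π v) = 0 := hw
      rw [hF] at hw'
      obtain ⟨m', hm'⟩ := hmk0 _ hw'
      obtain ⟨u, rfl⟩ := hf m'
      refine ⟨⟨v - x • u, ?_⟩, ?_⟩
      · simp [hm']
      · apply Subtype.ext
        change π (v - x • u) = π v
        rw [map_sub, sub_eq_self]
        ext i
        change Ideal.Quotient.mk _ (x * u i) = 0
        rw [Ideal.Quotient.eq_zero_iff_mem]
        exact Ideal.mul_mem_right _ _ (Ideal.mem_span_singleton_self x)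
    have hgk : LinearMap.ker g = x • (⊤ : Submodule A (LinearMap.ker f)) := by
      ext ⟨v, hv⟩
      rw [LinearMap.mem_ker, Submodule.mem_smul_pointwise_iff_exists]
      constructor
      · intro h0
        obtain ⟨w, rfl⟩ := hπ0 v (congrArg Subtype.val h0)
        refine ⟨⟨w, ?_⟩, trivial, rfl⟩
        have : x • f w = x • 0 := by rw [← map_smul, smul_zero]; exact hv
        exact hreg this
      · rintro ⟨w, -, hw⟩
        rw [← hw]
        apply Subtype.ext
        ext i
        change Ideal.Quotient.mk _ (x * w.1 i) = 0
        rw [Ideal.Quotient.eq_zero_iff_mem]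
        exact Ideal.mul_mem_right _ _ (Ideal.mem_span_singleton_self x)
    let e : QuotSMulTop x (LinearMap.ker f) ≃ₗ[A] (LinearMap.ker F).restrictScalars A :=
      (Submodule.quotEquivOfEq _ _ hgk.symm) ≪≫ₗ g.quotKerEquivOfSurjective hgs
    let e' : QuotSMulTop x (LinearMap.ker f) ≃ₗ[A] (LinearMap.ker F) := e
    have := h k F hFs
    exact this.congr n (e'.extendScalarsOfSurjective (S := Q) Ideal.Quotient.mk_surjective).symm

lemma aux_allSyzFree (n : ℕ) : ∀ (A : Type) [CommRing A] [IsRegularLocalRing A],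
    ringKrullDim A = n → ∀ (M : Type) [AddCommGroup M] [Module A M] [Module.Finite A M],
      AllSyzFree A n M := by
  induction n with
  | zero =>
    intro A _ _ hA M _ _ _
    have := aux_isDomain 0 A hA
    have : Ring.KrullDimLE 0 A := Ring.krullDimLE_iff.2 hA.le
    have hf : IsField A := Ring.KrullDimLE.isField_of_isDomain
    let _ := hf.toField
    exact Module.Free.of_divisionRing A M
  | succ n ih =>
    intro A _ _ hA M _ _ _ k f hf
    have := aux_isDomain (n+1) A hA
    obtain ⟨x, hx, hx2, -⟩ := aux_exists_not_mem (A := A) (by rw [hA]; exact_mod_cast Nat.succ_ne_zero n)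
    have hx0 : x ≠ 0 := by rintro rfl; exact hx2 (zero_mem _)
    obtain ⟨hreg, hdim⟩ := aux_regular_quot hx hx2
    have hdim' : ringKrullDim (A ⧸ Ideal.span {x}) = n := by
      obtain ⟨d, hd⟩ := aux_dim_nat (A ⧸ Ideal.span {x})
      rw [hA, hd] at hdim
      rw [hd]
      have : d + 1 = n + 1 := by exact_mod_cast hdim
      have : d = n := by omega
      rw [this]
    refine AllSyzFree.of_quot x hx hx0 n (LinearMap.ker f) ?_ ?_
    · intro a b hab
      ext i
      have := congrArg (fun z : LinearMap.ker f => (z : Fin k → A) i) hab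
      simpa [hx0] using this
    · have := Module.Finite.of_restrictScalars_finite A (A ⧸ Ideal.span {x})
        (QuotSMulTop x (LinearMap.ker f))
      exact ih _ hdim' _

open TensorProduct in
lemma aux_stablyFree (A B : Type) [CommRing A] [IsNoetherianRing A] [CommRing B] [Algebra A B]
    [Module.Flat A B] (n : ℕ) :
    ∀ (M : Type) [AddCommGroup M] [Module A M] [Module.Finite A M], AllSyzFree A n M →
      Module.Projective B (B ⊗[A] M) →
      ∃ m k : ℕ, Nonempty (((B ⊗[A] M) × (Fin m → B)) ≃ₗ[B] (Fin k → B)) := by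
  induction n with
  | zero =>
    intro M _ _ _ h _
    have : Module.Free A M := h
    obtain ⟨k, ⟨b⟩⟩ : ∃ k, Nonempty (Module.Basis (Fin k) B (B ⊗[A] M)) :=
      ⟨_, ⟨((Module.Free.chooseBasis A M).baseChange B).reindex (Fintype.equivFin _)⟩⟩
    exact ⟨0, k, ⟨LinearEquiv.prodUnique ≪≫ₗ b.equivFun⟩⟩
  | succ n ih =>
    intro M _ _ _ h hP
    obtain ⟨k, f, hf⟩ := Module.Finite.exists_fin' A M
    have hK := h k f hf
    let j := (LinearMap.ker f).subtype.baseChange B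
    let g := f.baseChange B
    have hj : Function.Injective j :=
      Module.Flat.lTensor_preserves_injective_linearMap (M := B) _ (LinearMap.ker f).injective_subtype
    have hg : Function.Surjective g := LinearMap.lTensor_surjective B hf
    have hex : Function.Exact j g :=
      lTensor_exact B (LinearMap.exact_subtype_ker_map f) hf
    obtain ⟨s, hs⟩ := Module.projective_lifting_property g LinearMap.id hg
    let e := lequivProdOfRightSplitExact hj (LinearMap.exact_iff.1 hex).symm hs
    have : Module.Projective B (B ⊗[A] (LinearMap.ker f)) :=
      Module.Projective.of_split (e.toLinearMap ∘ₗ LinearMap.inl B _ _)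
        (LinearMap.fst B _ _ ∘ₗ e.symm.toLinearMap) (by ext; simp)
    obtain ⟨m, k', ⟨e'⟩⟩ := ih _ hK this
    let b : (B ⊗[A] (Fin k → A)) ≃ₗ[B] (Fin k → B) :=
      ((Pi.basisFun A (Fin k)).baseChange B).equivFun
    refine ⟨k', k + m, ⟨?_⟩⟩
    exact (LinearEquiv.refl B _).prodCongr e'.symm ≪≫ₗ (LinearEquiv.prodAssoc B _ _ _).symm ≪≫ₗ
      ((LinearEquiv.prodComm B _ _ ≪≫ₗ e ≪≫ₗ b).prodCongr (LinearEquiv.refl B _)) ≪≫ₗ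
      (LinearEquiv.sumArrowLequivProdArrow (Fin k) (Fin m) B B).symm ≪≫ₗ
      LinearEquiv.funCongrLeft B B finSumFinEquiv.symm

lemma aux_det {B : Type} [CommRing B] [IsDomain B] (m : ℕ)
    (φ : (Fin (m+1) → B) →ₗ[B] (Fin m → B)) (s : (Fin m → B) →ₗ[B] (Fin (m+1) → B))
    (h : φ ∘ₗ s = LinearMap.id) : Nonempty (LinearMap.ker φ ≃ₗ[B] B) := by
  have hφs : ∀ c, φ (s c) = c := fun c => LinearMap.congr_fun h c
  let S : Fin m → Fin (m+1) → B := fun i => s (Pi.single i 1)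
  have hsum : ∀ c : Fin m → B, s c = ∑ i, c i • S i := by
    intro c
    conv_lhs => rw [pi_eq_sum_univ' c, map_sum]
    simp only [map_smul, S]
  let M : (Fin (m+1) → B) → Matrix (Fin (m+1)) (Fin (m+1)) B :=
    fun w => Matrix.of (Fin.cons w S : Fin (m+1) → Fin (m+1) → B)
  obtain ⟨ψ, hψ⟩ : ∃ ψ : (Fin (m+1) → B) →ₗ[B] B, ∀ w, ψ w = (M w).det := by
    refine ⟨(Matrix.detRowAlternating (R := B) (n := Fin (m+1))).toMultilinearMap.toLinearMap
      (Fin.cons 0 S) 0, fun w => ?_⟩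
    change Matrix.det (Function.update (Fin.cons 0 S : Fin (m+1) → Fin (m+1) → B) 0 w) = _
    rw [Fin.update_cons_zero]
    rfl
  have hψs : ∀ c, ψ (s c) = 0 := by
    intro c
    rw [hsum, map_sum]
    refine Finset.sum_eq_zero fun i _ => ?_
    rw [map_smul, hψ, Matrix.det_zero_of_row_eq (i := 0) (j := i.succ) (Fin.succ_ne_zero i).symm,
      smul_zero]
    rfl
  have hinj : ∀ w, φ w = 0 → ψ w = 0 → w = 0 := by
    intro w hw h0
    rw [hψ] at h0
    obtain ⟨v, hv, hv0⟩ := Matrix.exists_vecMul_eq_zero_iff.2 h0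
    rw [Matrix.vecMul_eq_sum, Fin.sum_univ_succ] at hv0
    change v 0 • w + ∑ i : Fin m, v i.succ • S i = 0 at hv0
    rw [← hsum (fun i => v i.succ)] at hv0
    have h1 := congrArg φ hv0
    rw [map_add, map_smul, hw, smul_zero, zero_add, hφs, map_zero] at h1
    rw [h1, map_zero, add_zero] at hv0
    rcases smul_eq_zero.1 hv0 with h2 | h2
    · exfalso
      apply hv
      ext i
      refine Fin.cases h2 (fun i => ?_) i
      exact congrFun h1 i
    · exact h2
  have hsurj : LinearMap.range ψ = ⊤ := by
    by_contra hne
    obtain ⟨P, hP, hle⟩ := Ideal.exists_le_maximal (LinearMap.range ψ) hne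
    let _ : Field (B ⧸ P) := Ideal.Quotient.field P
    let q := Ideal.Quotient.mk P
    let S' : Fin m → Fin (m+1) → (B ⧸ P) := fun i j => q (S i j)
    have hlin : LinearIndependent (B ⧸ P) S' := by
      rw [Fintype.linearIndependent_iff]
      intro c' hc'
      choose c hc using fun i => Ideal.Quotient.mk_surjective (c' i)
      have hsc : ∀ j, s c j ∈ P := by
        intro j
        have := congrFun hc' j
        rw [← Ideal.Quotient.eq_zero_iff_mem, hsum]
        simpa [S', ← hc, q] using this
      intro i
      rw [← hc, Ideal.Quotient.eq_zero_iff_mem, ← hφs c, pi_eq_sum_univ' (s c), map_sum,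
        Finset.sum_apply]
      refine Ideal.sum_mem _ fun j _ => ?_
      rw [map_smul]
      exact Ideal.mul_mem_right _ _ (hsc j)
    obtain ⟨w', hw'⟩ : ∃ w', w' ∉ Submodule.span (B ⧸ P) (Set.range S') := by
      by_contra! hall
      have h1 : Submodule.span (B ⧸ P) (Set.range S') = ⊤ := eq_top_iff.2 fun w _ => hall w
      have h2 := finrank_range_le_card (R := B ⧸ P) S'
      rw [Set.finrank, h1, finrank_top] at h2
      simp at h2
    have hlin' := linearIndependent_finCons.2 ⟨hlin, hw'⟩
    choose w hw using fun i => Ideal.Quotient.mk_surjective (w' i)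
    have hmem : ψ w ∈ P := hle ⟨w, rfl⟩
    rw [hψ, ← Ideal.Quotient.eq_zero_iff_mem, RingHom.map_det] at hmem
    have heq : q.mapMatrix (M w) = Matrix.of (Fin.cons w' S' : Fin (m+1) → Fin (m+1) → (B ⧸ P)) := by
      ext i j
      refine Fin.cases ?_ (fun i => ?_) i
      · simp [M, q, hw]
      · simp [M, S', q]
    have hu := (Matrix.linearIndependent_rows_iff_isUnit
      (A := Matrix.of (Fin.cons w' S' : Fin (m+1) → Fin (m+1) → (B ⧸ P)))).1 hlin'
    rw [Matrix.isUnit_iff_isUnit_det, ← heq] at hu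
    exact hu.ne_zero hmem
  refine ⟨LinearEquiv.ofBijective (ψ ∘ₗ (LinearMap.ker φ).subtype) ⟨?_, ?_⟩⟩
  · rw [injective_iff_map_eq_zero]
    rintro ⟨w, hw⟩ h0
    exact Subtype.ext (hinj w hw h0)
  · intro b
    obtain ⟨w, rfl⟩ := LinearMap.range_eq_top.1 hsurj b
    refine ⟨⟨w - s (φ w), ?_⟩, ?_⟩
    · simp [hφs]
    · simp [hψs]

lemma aux_ideal_principal {B : Type} [CommRing B] [IsDomain B] (J : Ideal B) (m k : ℕ)
    (e : (J × (Fin m → B)) ≃ₗ[B] (Fin k → B)) : J.IsPrincipal := by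
  by_cases hJ : J = ⊥
  · rw [hJ]; exact bot_isPrincipal
  obtain ⟨a, haJ, ha⟩ := Submodule.exists_mem_ne_zero_of_ne_bot hJ
  have h1 : k ≤ m + 1 := by
    have := LinearMap.finrank_le_finrank_of_injective
      (f := (LinearMap.prodMap (Submodule.subtype J) LinearMap.id) ∘ₗ e.symm.toLinearMap)
      ((Function.Injective.prodMap (Submodule.injective_subtype J) Function.injective_id).comp
        e.symm.injective)
    simp at this
    omega
  have h2 : m + 1 ≤ k := by
    have hi : Function.Injective (LinearMap.toSpanSingleton B J ⟨a, haJ⟩) := by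
      intro b c hbc
      have := congrArg Subtype.val hbc
      simpa [ha] using this
    have := LinearMap.finrank_le_finrank_of_injective
      (f := e.toLinearMap ∘ₗ
        (LinearMap.prodMap (LinearMap.toSpanSingleton B J ⟨a, haJ⟩) LinearMap.id))
      (e.injective.comp (Function.Injective.prodMap hi Function.injective_id))
    simp at this
    omega
  obtain rfl : k = m + 1 := by omega
  obtain ⟨e2⟩ := aux_det m (LinearMap.snd B J (Fin m → B) ∘ₗ e.symm.toLinearMap)
    (e.toLinearMap ∘ₗ LinearMap.inr B J (Fin m → B)) (by ext; simp)
  have hx : ∀ j : J, e (j, 0) ∈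
    LinearMap.ker (LinearMap.snd B J (Fin m → B) ∘ₗ e.symm.toLinearMap) := by simp
  let z : J := (e.symm (e2.symm 1)).1
  refine ⟨⟨z, le_antisymm ?_ ?_⟩⟩
  · intro j hj
    rw [Submodule.mem_span_singleton]
    refine ⟨e2 ⟨e (⟨j, hj⟩, 0), hx _⟩, ?_⟩
    have h3 : (e2 ⟨e (⟨j, hj⟩, 0), hx _⟩) • e2.symm 1 = ⟨e (⟨j, hj⟩, 0), hx _⟩ := by
      rw [← map_smul, smul_eq_mul, mul_one, e2.symm_apply_apply]
    have h4 := congrArg (fun t => ((e.symm t.1).1 : B)) h3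
    simpa using h4
  · rw [Submodule.span_singleton_le_iff_mem]
    exact z.2

lemma aux_regular_loc {A : Type} [CommRing A] [IsRegularRing A] (M : Submonoid A)
    (S : Type) [CommRing S] [Algebra A S] [IsLocalization M S] : IsRegularRing S := by
  have : IsNoetherianRing S := IsLocalization.isNoetherianRing M S inferInstance
  rw [isRegularRing_iff]
  intro P _
  let T := Localization.AtPrime P
  have := IsLocalization.isLocalization_isLocalization_atPrime_isLocalization (M := M) T P
  exact IsRegularLocalRing.of_ringEquiv (IsLocalization.algEquiv
    (P.comap (algebraMap A S)).primeCompl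
    (Localization.AtPrime (P.comap (algebraMap A S))) T).toRingEquiv

lemma aux_loc_principal {C : Type} [CommRing C] [IsDomain C] [IsNoetherianRing C]
    (hU : ∀ (P : Ideal C) [P.IsMaximal], UniqueFactorizationMonoid (Localization.AtPrime P))
    (q : Ideal C) [q.IsPrime] (hq : q.height = 1) (P : Ideal C) [P.IsMaximal] :
    (q.map (algebraMap C (Localization.AtPrime P))).IsPrincipal := by
  by_cases hqP : q ≤ P
  · have hd : Disjoint (P.primeCompl : Set C) (q : Set C) := by
      rw [Set.disjoint_left]
      intro a ha ha'
      exact ha (hqP ha')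
    have hpr := IsLocalization.isPrime_of_isPrime_disjoint P.primeCompl (Localization.AtPrime P)
      q inferInstance hd
    have hh := IsLocalization.height_map_of_disjoint (S := Localization.AtPrime P) P.primeCompl q hd
    rw [hq] at hh
    have := hU P
    exact UniqueFactorizationMonoid.isPrincipal_of_height_eq_one hh
  · obtain ⟨a, haq, haP⟩ := Set.not_subset.1 hqP
    have : q.map (algebraMap C (Localization.AtPrime P)) = ⊤ :=
      Ideal.eq_top_of_isUnit_mem _ (Ideal.mem_map_of_mem _ haq)
        (IsLocalization.map_units (Localization.AtPrime P) (⟨a, haP⟩ : P.primeCompl))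
    rw [this]
    exact top_isPrincipal

lemma aux_proj_of_principal {C : Type} [CommRing C] [IsDomain C] (I : Ideal C)
    (h : I.IsPrincipal) : Module.Projective C I := by
  obtain ⟨a, rfl⟩ := h
  by_cases ha : a = 0
  · subst ha
    have : Subsingleton (Submodule.span C {(0 : C)}) := by
      rw [Submodule.span_zero_singleton]; infer_instance
    infer_instance
  · exact Module.Projective.of_equiv (LinearEquiv.toSpanNonzeroSingleton C C a ha)

lemma aux_proj {C : Type} [CommRing C] [IsDomain C] [IsNoetherianRing C] (q : Ideal C)
    (h : ∀ (P : Ideal C) [P.IsMaximal],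
      (q.map (algebraMap C (Localization.AtPrime P))).IsPrincipal) :
    Module.Projective C q := by
  have : Module.FinitePresentation C q := Module.finitePresentation_of_finite C q
  refine Module.projective_of_localization_maximal' (fun P _ => Localization.AtPrime P)
    (fun P _ => q.map (algebraMap C (Localization.AtPrime P)))
    (fun P _ => Algebra.idealMap q (S := Localization.AtPrime P)) ?_
  intro P _
  exact aux_proj_of_principal _ (h P)

open TensorProduct in
lemma aux_map_principal {A : Type} [CommRing A] [IsDomain A] [IsRegularLocalRing A] (M : Submonoid A)
    (B : Type) [CommRing B] [IsDomain B] [Algebra A B] [IsLocalization M B] (p : Ideal A)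
    (hproj : Module.Projective B (p.map (algebraMap A B))) :
    (p.map (algebraMap A B)).IsPrincipal := by
  have : Module.Flat A B := IsLocalization.flat B M
  obtain ⟨n, hn⟩ := aux_dim_nat A
  have hbc : IsBaseChange B (Algebra.idealMap p (S := B)) :=
    IsLocalizedModule.isBaseChange M B _
  let e : (B ⊗[A] p) ≃ₗ[B] p.map (algebraMap A B) := hbc.equiv
  obtain ⟨m, k, ⟨e'⟩⟩ := aux_stablyFree A B n p (aux_allSyzFree n A hn p)
    (Module.Projective.of_equiv e.symm)
  exact aux_ideal_principal _ m k ((e.symm.prodCongr (LinearEquiv.refl B _)) ≪≫ₗ e')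

lemma aux_UFD_local (n : ℕ) : ∀ (A : Type) [CommRing A] [IsDomain A] [IsRegularRing A]
    [IsLocalRing A], ringKrullDim A < n → UniqueFactorizationMonoid A := by
  induction n with
  | zero =>
    intro A _ _ _ _ h
    have := ringKrullDim_nonneg_of_nontrivial (R := A)
    exact absurd h (not_lt.2 this)
  | succ n ih =>
    intro A _ _ _ _ hA
    have hreg := IsRegularLocalRing.of_isRegularRing_of_isLocalRing A
    by_cases h0 : ringKrullDim A = 0
    · have : Ring.KrullDimLE 0 A := Ring.krullDimLE_iff.2 h0.le
      have hf : IsField A := Ring.KrullDimLE.isField_of_isDomain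
      let _ := hf.toField
      infer_instance
    obtain ⟨x, hx, hx2, -⟩ := aux_exists_not_mem h0
    have hx0 : x ≠ 0 := by rintro rfl; exact hx2 (zero_mem _)
    obtain ⟨hregx, -⟩ := aux_regular_quot hx hx2
    have hxprime : Prime x := by
      obtain ⟨d, hd⟩ := aux_dim_nat (A ⧸ Ideal.span {x})
      have := aux_isDomain d _ hd
      have := (Ideal.Quotient.isDomain_iff_prime (Ideal.span {x})).1 this
      exact (Ideal.span_singleton_prime hx0).1 this
    refine UniqueFactorizationMonoid.of_forall_isPrincipal_of_height_eq_one fun p _ hp => ?_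
    by_cases hxp : x ∈ p
    · exact ⟨x, p.eq_span_singleton_of_height_eq_one hp hxp hxprime⟩
    refine Ideal.isPrincipal_of_isPrincipal_localizationAway_of_prime hxprime hxp ?_
    let B := Localization.Away x
    have : IsDomain B := IsLocalization.Away.isDomain B hx0
    have hregB : IsRegularRing B := aux_regular_loc (Submonoid.powers x) B
    have hd : Disjoint (Submonoid.powers x : Set A) (p : Set A) := by
      rw [Ideal.disjoint_powers_iff_notMem_of_isPrime]
      exact hxp
    refine aux_map_principal (Submonoid.powers x) B p ?_
    have hpr := IsLocalization.isPrime_of_isPrime_disjoint (Submonoid.powers x) B p inferInstance hd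
    have hh := IsLocalization.height_map_of_disjoint (S := B) (Submonoid.powers x) p hd
    rw [hp] at hh
    refine aux_proj _ fun Q _ => aux_loc_principal ?_ _ hh Q
    intro P hP
    have := aux_regular_loc P.primeCompl (Localization.AtPrime P)
    apply ih
    rw [IsLocalization.AtPrime.ringKrullDim_eq_height P]
    have hu : P.height = (P.under A).height := by
      exact (IsLocalization.height_under (Submonoid.powers x) P).symm
    have hxP : x ∉ P.under A := by
      intro hmem
      exact hP.ne_top (P.eq_top_of_isUnit_mem hmem (IsLocalization.Away.algebraMap_isUnit x))
    have hlt : P.under A < maximalIdeal A := by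
      refine lt_of_le_of_ne (le_maximalIdeal (Ideal.IsPrime.ne_top inferInstance)) ?_
      intro heq
      exact hxP (heq ▸ hx)
    have h1 : (P.under A).height < (maximalIdeal A).height := by
      exact Ideal.height_strict_mono_of_isPrime_of_isPrime hlt
    rw [← IsLocalRing.maximalIdeal_height_eq_ringKrullDim] at hA
    rw [hu]
    have hA' : (maximalIdeal A).height < ((n + 1 : ℕ) : ℕ∞) := by exact_mod_cast hA
    have : (P.under A).height < (n : ℕ∞) := by
      have h2 : (maximalIdeal A).height ≤ (n : ℕ∞) := by
        rw [Nat.cast_add, Nat.cast_one] at hA'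
        exact Order.le_of_lt_add_one hA'
      exact h1.trans_le h2
    exact_mod_cast this

lemma aux_semilocal {R : Type} [CommRing R] [IsDomain R] [Finite (MaximalSpectrum R)]
    (q : Ideal R) (h : ∀ (P : Ideal R) [P.IsMaximal],
      (q.map (algebraMap R (Localization.AtPrime P))).IsPrincipal) : q.IsPrincipal := by
  classical
  have := Fintype.ofFinite (MaximalSpectrum R)
  let L : MaximalSpectrum R → Type := fun P => Localization.AtPrime P.asIdeal
  have hg : ∀ P : MaximalSpectrum R, ∃ g ∈ q,
      q.map (algebraMap R (Localization.AtPrime P.asIdeal)) =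
        Ideal.span {algebraMap R (Localization.AtPrime P.asIdeal) g} := by
    intro P
    obtain ⟨z, hz⟩ := h P.asIdeal
    have hzm : z ∈ q.map (algebraMap R (Localization.AtPrime P.asIdeal)) := by
      rw [hz]; exact Submodule.mem_span_singleton_self z
    obtain ⟨⟨g, u⟩, hgu⟩ := (IsLocalization.mem_map_algebraMap_iff P.asIdeal.primeCompl _).1 hzm
    refine ⟨g, g.2, ?_⟩
    rw [← hgu, hz]
    exact (Ideal.span_singleton_mul_right_unit (IsLocalization.map_units _ u) z).symm
  choose g hgq hgen using hg
  have hcop : Pairwise (Function.onFun IsCoprime (fun P : MaximalSpectrum R => P.asIdeal)) := by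
    intro P Q hPQ
    exact Ideal.isCoprime_of_isMaximal (fun h => hPQ (MaximalSpectrum.ext h))
  have ha : ∀ P : MaximalSpectrum R, ∃ a : R, a - 1 ∈ P.asIdeal ∧
      ∀ Q : MaximalSpectrum R, Q ≠ P → a ∈ Q.asIdeal := by
    intro P
    obtain ⟨a, ha⟩ := Ideal.exists_forall_sub_mem_ideal hcop
      (fun Q => if Q = P then (1 : R) else 0)
    refine ⟨a, by simpa using ha P, fun Q hQ => ?_⟩
    simpa [hQ] using ha Q
  choose a ha1 ha0 using ha
  let G : R := ∑ P, a P * g P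
  have hGq : G ∈ q := Ideal.sum_mem _ fun P _ => Ideal.mul_mem_left _ _ (hgq P)
  refine ⟨G, ?_⟩
  change q = Ideal.span {G}
  refine Ideal.eq_of_localization_maximal fun P hP => ?_
  rw [Ideal.map_span, Set.image_singleton]
  let P' : MaximalSpectrum R := ⟨P, hP⟩
  have hgenP := hgen P'
  let f := algebraMap R (Localization.AtPrime P)
  change Ideal.map f q = Ideal.span {f (g P')} at hgenP
  change Ideal.map f q = Ideal.span {f G}
  have hc : ∀ Q, ∃ c, f (g Q) = f (g P') * c := by
    intro Q
    have : f (g Q) ∈ Ideal.map f q := Ideal.mem_map_of_mem _ (hgq Q)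
    rw [hgenP] at this
    exact Ideal.mem_span_singleton.1 this
  choose c hc using hc
  have hmem : ∀ r ∈ P, f r ∈ maximalIdeal (Localization.AtPrime P) := by
    intro r hr
    exact (IsLocalization.AtPrime.to_map_mem_maximal_iff (Localization.AtPrime P) P r).2 hr
  have hGu : f G = f (g P') * (f (a P') + ∑ Q ∈ Finset.univ.erase P', f (a Q) * c Q) := by
    change f (∑ Q, a Q * g Q) = _
    rw [← Finset.add_sum_erase _ _ (Finset.mem_univ P'), map_add, map_sum, mul_add, Finset.mul_sum]
    congr 1
    · rw [map_mul, mul_comm]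
    · refine Finset.sum_congr rfl fun Q _ => ?_
      rw [map_mul, hc Q]; ring
  have hu : IsUnit (f (a P') + ∑ Q ∈ Finset.univ.erase P', f (a Q) * c Q) := by
    by_contra hnu
    rw [← mem_nonunits_iff, ← IsLocalRing.mem_maximalIdeal] at hnu
    have h1 : ∑ Q ∈ Finset.univ.erase P', f (a Q) * c Q ∈ maximalIdeal (Localization.AtPrime P) := by
      refine Ideal.sum_mem _ fun Q hQ => Ideal.mul_mem_right _ _ (hmem _ ?_)
      exact ha0 Q P' (Finset.ne_of_mem_erase hQ).symm
    have h2 := (Ideal.add_mem_iff_left _ h1).1 hnu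
    have h3 : a P' ∈ P :=
      (IsLocalization.AtPrime.to_map_mem_maximal_iff (Localization.AtPrime P) P _).1 h2
    have h4 := P.sub_mem h3 (ha1 P')
    rw [sub_sub_cancel] at h4
    exact hP.ne_top (P.eq_top_iff_one.2 h4)
  rw [hgenP, hGu, Ideal.span_singleton_mul_right_unit hu]

lemma aux_isRegularLocalRing {A : Type} [CommRing A] [IsLocalRing A] (h : IsRegularLocal A) :
    IsRegularLocalRing A := by
  obtain ⟨_, s, hs, hcard⟩ := h
  refine IsRegularLocalRing.of_spanFinrank_maximalIdeal_le (R := A) ?_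
  rw [← hcard, ← hs]
  have := Submodule.spanFinrank_span_le_ncard_of_finite (R := A) (s := (s : Set A)) s.finite_toSet
  rw [Set.ncard_coe_finset] at this
  exact_mod_cast this

/-- Lemma 0.12 of Saltman, "Cyclic algebras over p-adic curves".
A regular semilocal Noetherian integral domain is a unique factorization domain.  Here
*semilocal* means having only finitely many maximal ideals, and *regular* means that all
localizations at primes are regular local rings. -/
theorem regular_semilocal_domain_is_UFD
    (R : Type) [CommRing R] [IsDomain R] [IsNoetherianRing R]
    (hsemilocal : {I : Ideal R | I.IsMaximal}.Finite)
    (hregular : ∀ (P : Ideal R) [P.IsPrime], IsRegularLocal (Localization.AtPrime P)) :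
    UniqueFactorizationMonoid R := by
  have hreg : IsRegularRing R := isRegularRing_iff.2 fun P _ => aux_isRegularLocalRing (hregular P)
  have : Finite (MaximalSpectrum R) := by
    have := hsemilocal.to_subtype
    exact Finite.of_injective (β := {I : Ideal R | I.IsMaximal})
      (fun P => ⟨P.asIdeal, P.isMaximal⟩) fun P Q h => MaximalSpectrum.ext (congrArg Subtype.val h)
  refine UniqueFactorizationMonoid.of_forall_isPrincipal_of_height_eq_one fun p _ hp => ?_
  refine aux_semilocal p fun P _ => aux_loc_principal ?_ p hp P
  intro Q _
  have := aux_regular_loc Q.primeCompl (Localization.AtPrime Q)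
  obtain ⟨d, hd⟩ := aux_dim_nat (Localization.AtPrime Q)
  refine aux_UFD_local (d + 1) _ ?_
  rw [hd]
  exact_mod_cast Nat.lt_succ_self d
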